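/- Let M(1),…,M(n) be an n-outcome POVM on ℂ^d ⊗ ℂ^k, let ρ₁, ρ₂ be density matrices on ℂ^d, let ξ₁, ξ₂ be density matrices on ℂ^k, and let λ₁, λ₂ be post-processings from n outcomes to m outcomes. Then F(ρ₁,ρ₂)·F(ξ₁,ξ₂)·F(λ₁,λ₂) ≤ Σ_{y=1}^m (Σ_{i=1}^n λ₁(i|y)·Tr[M(i)(ρ₁⊗ξ₁)])^{1/2} · (Σ_{i=1}^n λ₂(i|y)·Tr[M(i)(ρ₂⊗ξ₂)])^{1/2}, where ⊗ denotes the Kronecker product of matrices. -/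

import Mathlib

open scoped BigOperators Kronecker ComplexOrder Matrix

noncomputable section

/-- The positive semidefinite square root of a positive semidefinite matrix
(the definition of the older Mathlib, since removed). -/
noncomputable def Matrix.PosSemidef.sqrt {n : Type*} {𝕜 : Type*} [Fintype n] [RCLike 𝕜]
    [DecidableEq n] {A : Matrix n n 𝕜} (hA : A.PosSemidef) : Matrix n n 𝕜 :=
  hA.1.eigenvectorUnitary.1 *
    Matrix.diagonal ((RCLike.ofReal : ℝ → 𝕜) ∘ Real.sqrt ∘ hA.1.eigenvalues) *
    (star hA.1.eigenvectorUnitary : Matrix n n 𝕜)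

namespace QProg

/-- The positive-semidefinite square root of a matrix, extended by `0` to all matrices. -/
noncomputable def matSqrt {α : Type*} [Fintype α] [DecidableEq α]
    (A : Matrix α α ℂ) : Matrix α α ℂ :=
  @dite _ A.PosSemidef (Classical.propDecidable _) (fun h => h.sqrt) (fun _ => 0)

/-- The fidelity `F(ρ,σ) = Tr √(√ρ σ √ρ)` of two (density) matrices. -/
noncomputable def fid {α : Type*} [Fintype α] [DecidableEq α]
    (ρ σ : Matrix α α ℂ) : ℝ :=
  ((matSqrt (matSqrt ρ * σ * matSqrt ρ)).trace).re

/-- A density matrix: positive semidefinite with unit trace. -/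
def IsDensity {α : Type*} [Fintype α] [DecidableEq α] (ρ : Matrix α α ℂ) : Prop :=
  ρ.PosSemidef ∧ ρ.trace = 1

/-- An `n`-outcome POVM: positive semidefinite effects summing to the identity. -/
def IsPOVM {α : Type*} [Fintype α] [DecidableEq α] {n : ℕ}
    (E : Fin n → Matrix α α ℂ) : Prop :=
  (∀ i, (E i).PosSemidef) ∧ ∑ i, E i = 1

/-- The outcome distribution `p^E_ρ(i) = Tr[E(i) ρ]`. -/
noncomputable def outDist {α : Type*} [Fintype α] [DecidableEq α] {n : ℕ}
    (E : Fin n → Matrix α α ℂ) (ρ : Matrix α α ℂ) (i : Fin n) : ℝ :=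
  ((E i * ρ).trace).re

/-- The Bhattacharyya coefficient `B(p,q) = ∑ᵢ √(p i) √(q i)`. -/
noncomputable def bhat {n : ℕ} (p q : Fin n → ℝ) : ℝ :=
  ∑ i, Real.sqrt (p i) * Real.sqrt (q i)

/-- `B(E₁,E₂)`: infimum of `B(p^{E₁}_{ρ₁}, p^{E₂}_{ρ₂}) / F(ρ₁,ρ₂)` over pairs of
density matrices with nonvanishing fidelity. -/
noncomputable def obsB {α : Type*} [Fintype α] [DecidableEq α] {n : ℕ}
    (E₁ E₂ : Fin n → Matrix α α ℂ) : ℝ :=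
  sInf { r : ℝ | ∃ ρ₁ ρ₂ : Matrix α α ℂ, IsDensity ρ₁ ∧ IsDensity ρ₂ ∧
    fid ρ₁ ρ₂ ≠ 0 ∧ r = bhat (outDist E₁ ρ₁) (outDist E₂ ρ₂) / fid ρ₁ ρ₂ }

/-- A post-processing from `n` outcomes to `m` outcomes. -/
def IsPostProc {n m : ℕ} (lam : Fin n → Fin m → ℝ) : Prop :=
  (∀ i y, 0 ≤ lam i y) ∧ ∀ i, ∑ y, lam i y = 1

/-- The action `(λ⋆E)(y) = ∑ᵢ λ(i|y) E(i)` of a post-processing on a POVM. -/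
noncomputable def ppStar {α : Type*} [Fintype α] [DecidableEq α] {n m : ℕ}
    (lam : Fin n → Fin m → ℝ) (E : Fin n → Matrix α α ℂ) (y : Fin m) :
    Matrix α α ℂ :=
  ∑ i, (lam i y : ℂ) • E i

/-- The action `(λ⋆p)(y) = ∑ᵢ λ(i|y) p(i)` of a post-processing on a probability vector. -/
noncomputable def ppStarVec {n m : ℕ} (lam : Fin n → Fin m → ℝ) (p : Fin n → ℝ)
    (y : Fin m) : ℝ :=
  ∑ i, lam i y * p i

/-- A probability vector on `{1,…,n}`. -/
def IsProbVec {n : ℕ} (p : Fin n → ℝ) : Prop :=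
  (∀ i, 0 ≤ p i) ∧ ∑ i, p i = 1

/-- `F(λ₁,λ₂)`: infimum of `B(λ₁⋆p, λ₂⋆p)` over probability vectors `p`. -/
noncomputable def ppF {n m : ℕ} (lam₁ lam₂ : Fin n → Fin m → ℝ) : ℝ :=
  sInf { r : ℝ | ∃ p : Fin n → ℝ, IsProbVec p ∧
    r = bhat (ppStarVec lam₁ p) (ppStarVec lam₂ p) }


lemma sqrt_spec {α : Type*} [Fintype α] [DecidableEq α] {A : Matrix α α ℂ} (hA : A.PosSemidef) :
    (matSqrt A)ᴴ = matSqrt A ∧ matSqrt A * matSqrt A = A ∧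
    ((matSqrt A).trace.re : ℂ) = (matSqrt A).trace ∧
    ∃ T : Matrix α α ℂ, Tᴴ = T ∧ T * A = matSqrt A ∧ T * T * A * (T * T) = T * T := by
  have hs : matSqrt A = hA.sqrt := by unfold matSqrt; exact dif_pos hA
  rw [hs]
  unfold Matrix.PosSemidef.sqrt
  have hsp := hA.1.spectral_theorem
  rw [Unitary.conjStarAlgAut_apply] at hsp
  have hU : star (hA.1.eigenvectorUnitary : Matrix α α ℂ) *
      (hA.1.eigenvectorUnitary : Matrix α α ℂ) = 1 := Unitary.coe_star_mul_self _
  have hnn := hA.eigenvalues_nonneg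
  generalize hA.1.eigenvalues = μ at *
  have hstar : ((star hA.1.eigenvectorUnitary : Matrix.unitaryGroup α ℂ) : Matrix α α ℂ) =
    star (hA.1.eigenvectorUnitary : Matrix α α ℂ) := rfl
  generalize (hA.1.eigenvectorUnitary : Matrix α α ℂ) = U at *
  have key : ∀ D E : Matrix α α ℂ, (U * D * star U) * (U * E * star U) = U * (D * E) * star U := by
    intro D E
    calc _ = U * D * (star U * U) * E * star U := by simp only [Matrix.mul_assoc]
      _ = _ := by rw [hU]; simp only [Matrix.mul_assoc, Matrix.one_mul]
  have hherm : ∀ f : α → ℝ, (U * Matrix.diagonal ((RCLike.ofReal : ℝ → ℂ) ∘ f) * star U)ᴴ =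
      U * Matrix.diagonal ((RCLike.ofReal : ℝ → ℂ) ∘ f) * star U := by
    intro f
    rw [Matrix.star_eq_conjTranspose, Matrix.conjTranspose_mul, Matrix.conjTranspose_mul,
      Matrix.conjTranspose_conjTranspose, Matrix.diagonal_conjTranspose, Matrix.mul_assoc]
    congr 3
    ext i; simp
  have hd : ∀ f g : α → ℝ, (Matrix.diagonal ((RCLike.ofReal : ℝ → ℂ) ∘ f)) *
      (Matrix.diagonal ((RCLike.ofReal : ℝ → ℂ) ∘ g)) =
      Matrix.diagonal ((RCLike.ofReal : ℝ → ℂ) ∘ (fun i => f i * g i)) := by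
    intro f g
    rw [Matrix.diagonal_mul_diagonal]
    congr 1; ext i; simp
  refine ⟨hherm _, ?_, ?_, U * Matrix.diagonal ((RCLike.ofReal : ℝ → ℂ) ∘
      (fun i => (Real.sqrt (μ i))⁻¹)) * star U, hherm _, ?_, ?_⟩
  · rw [key, hd, hsp]
    congr 3; ext i; simp [Real.mul_self_sqrt (hnn i)]
  · rw [Matrix.trace_mul_comm, ← Matrix.mul_assoc, hU, Matrix.one_mul, Matrix.trace_diagonal]
    simp
  · conv_lhs => rw [hsp]
    rw [key, hd]
    congr 3; ext i
    have : (Real.sqrt (μ i))⁻¹ * μ i = Real.sqrt (μ i) := by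
      by_cases h : Real.sqrt (μ i) = 0
      · simp [h]
      · field_simp; rw [Real.sq_sqrt (hnn i)]
    simp only [Function.comp, this]
  · conv_lhs => rw [hsp]
    simp only [key, hd]
    congr 3; ext i
    have h2 := Real.mul_self_sqrt (hnn i)
    simp only [Function.comp]
    congr 1
    by_cases h : Real.sqrt (μ i) = 0
    · simp [h]
    · nth_rewrite 3 [← h2]
      field_simp

lemma exists_W {α : Type*} [Fintype α] [DecidableEq α] {ρ σ : Matrix α α ℂ}
    (hρ : ρ.PosSemidef) (hσ : σ.PosSemidef) :
    ∃ W : Matrix α α ℂ, (Wᴴ * W) * (Wᴴ * W) = Wᴴ * W ∧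
      (W * (matSqrt σ * matSqrt ρ)).trace = (fid ρ σ : ℂ) := by
  obtain ⟨ha, ha2, -, -⟩ := sqrt_spec hρ
  obtain ⟨hb, hb2, -, -⟩ := sqrt_spec hσ
  have hX : (matSqrt σ * matSqrt ρ)ᴴ * (matSqrt σ * matSqrt ρ) = matSqrt ρ * σ * matSqrt ρ := by
    rw [Matrix.conjTranspose_mul, ha, hb]
    conv_rhs => rw [← hb2]
    simp only [Matrix.mul_assoc]
  have hpsd : (matSqrt ρ * σ * matSqrt ρ).PosSemidef := by
    rw [← hX]; exact Matrix.posSemidef_conjTranspose_mul_self _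
  obtain ⟨-, -, htr, T, hT, hT1, hT2⟩ := sqrt_spec hpsd
  refine ⟨T * (matSqrt σ * matSqrt ρ)ᴴ, ?_, ?_⟩
  · rw [Matrix.conjTranspose_mul, Matrix.conjTranspose_conjTranspose, hT]
    generalize matSqrt σ * matSqrt ρ = X at *
    rw [← hX] at hT2
    calc _ = X * (T * T * (Xᴴ * X) * (T * T)) * Xᴴ := by simp only [Matrix.mul_assoc]
      _ = _ := by rw [hT2]; simp only [Matrix.mul_assoc]
  · rw [Matrix.mul_assoc, hX, hT1]
    exact htr.symm

lemma trace_cs {α : Type*} [Fintype α] (C D : Matrix α α ℂ) :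
    ‖(Cᴴ * D).trace‖ ≤ Real.sqrt (Cᴴ * C).trace.re * Real.sqrt (Dᴴ * D).trace.re := by
  have h1 : ∀ E : Matrix α α ℂ, (Eᴴ * E).trace.re = ∑ p : α × α, ‖E p.2 p.1‖ ^ 2 := by
    intro E
    simp only [Matrix.trace, Matrix.diag, Matrix.mul_apply, Matrix.conjTranspose_apply,
      Complex.re_sum, Fintype.sum_prod_type]
    refine Finset.sum_congr rfl fun i _ => Finset.sum_congr rfl fun j _ => ?_
    rw [Complex.star_def, Complex.conj_mul']
    norm_cast
  rw [h1, h1]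
  refine le_trans ?_ (Real.sum_mul_le_sqrt_mul_sqrt _ _ _)
  simp only [Matrix.trace, Matrix.diag, Matrix.mul_apply, Matrix.conjTranspose_apply,
    Fintype.sum_prod_type]
  refine (norm_sum_le _ _).trans (Finset.sum_le_sum fun i _ => ?_)
  refine (norm_sum_le _ _).trans (Finset.sum_le_sum fun j _ => ?_)
  simp

lemma trace_proj_le {α : Type*} [Fintype α] [DecidableEq α] (Z W : Matrix α α ℂ)
    (h : (Wᴴ * W) * (Wᴴ * W) = Wᴴ * W) :
    ((Z * Wᴴ)ᴴ * (Z * Wᴴ)).trace.re ≤ (Zᴴ * Z).trace.re := by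
  have e1 : ((Z * Wᴴ)ᴴ * (Z * Wᴴ)).trace = (Z * (Wᴴ * W) * Zᴴ).trace := by
    rw [Matrix.trace_mul_comm, Matrix.conjTranspose_mul, Matrix.conjTranspose_conjTranspose]
    simp only [Matrix.mul_assoc]
  have hP : (Wᴴ * W)ᴴ = Wᴴ * W := by simp
  rw [e1, Matrix.trace_mul_comm Zᴴ Z]
  generalize Wᴴ * W = P at *
  have e2 : (Z * (1 - P)) * (Z * (1 - P))ᴴ = Z * Zᴴ - Z * P * Zᴴ := by
    have : (1 - P) * (1 - P) = 1 - P := by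
      simp only [mul_sub, sub_mul, h, mul_one, one_mul]; simp
    rw [Matrix.conjTranspose_mul, Matrix.conjTranspose_sub, hP, Matrix.conjTranspose_one]
    calc _ = Z * ((1 - P) * (1 - P)) * Zᴴ := by simp only [Matrix.mul_assoc]
      _ = _ := by rw [this]; simp only [mul_sub, sub_mul, mul_one]
  have := (Matrix.posSemidef_self_mul_conjTranspose (Z * (1 - P))).trace_nonneg
  rw [e2, Matrix.trace_sub] at this
  have := (Complex.le_def.1 this).1
  simp at this
  linarith

lemma fuchs {α : Type*} [Fintype α] [DecidableEq α] {n : ℕ} {M : Fin n → Matrix α α ℂ}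
    (hM : IsPOVM M) (a b W : Matrix α α ℂ) (ha : aᴴ = a) (hb : bᴴ = b)
    (h : (Wᴴ * W) * (Wᴴ * W) = Wᴴ * W) :
    ‖(W * (b * a)).trace‖ ≤
      ∑ i, Real.sqrt (M i * (a * a)).trace.re * Real.sqrt (M i * (b * b)).trace.re := by
  have e : (W * (b * a)).trace = ∑ i, (W * (b * M i * a)).trace := by
    rw [← Matrix.trace_sum, ← Finset.mul_sum, ← Finset.sum_mul, ← Finset.mul_sum, hM.2, mul_one]
  rw [e]
  refine (norm_sum_le _ _).trans (Finset.sum_le_sum fun i _ => ?_)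
  obtain ⟨N, hN⟩ : ∃ N : Matrix α α ℂ, M i = Nᴴ * N := by
    obtain ⟨h1, h2, -⟩ := sqrt_spec (hM.1 i)
    exact ⟨matSqrt (M i), by rw [h1, h2]⟩
  have t : ∀ c : Matrix α α ℂ, cᴴ = c → (M i * (c * c)).trace = ((N * c)ᴴ * (N * c)).trace := by
    intro c hc
    rw [Matrix.conjTranspose_mul, hc, hN, ← Matrix.mul_assoc, Matrix.trace_mul_comm]
    simp only [Matrix.mul_assoc]
  rw [t a ha, t b hb, mul_comm]
  have e3 : W * (b * M i * a) = (N * b * Wᴴ)ᴴ * (N * a) := by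
    simp only [Matrix.conjTranspose_mul, Matrix.conjTranspose_conjTranspose, hb, hN,
      Matrix.mul_assoc]
  rw [e3]
  refine (trace_cs _ _).trans ?_
  exact mul_le_mul_of_nonneg_right (Real.sqrt_le_sqrt (trace_proj_le _ _ h)) (Real.sqrt_nonneg _)

lemma ppF_nonneg {n m : ℕ} (l₁ l₂ : Fin n → Fin m → ℝ) : 0 ≤ ppF l₁ l₂ := by
  apply Real.sInf_nonneg
  rintro r ⟨p, -, rfl⟩
  exact Finset.sum_nonneg fun i _ => by positivity

lemma ppF_le {n m : ℕ} (l₁ l₂ : Fin n → Fin m → ℝ) (i : Fin n) :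
    ppF l₁ l₂ ≤ ∑ y, Real.sqrt (l₁ i y) * Real.sqrt (l₂ i y) := by
  apply csInf_le
  · refine ⟨0, ?_⟩
    rintro r ⟨p, -, rfl⟩
    exact Finset.sum_nonneg fun i _ => by positivity
  · refine ⟨Pi.single i 1, ⟨fun j => ?_, by simp⟩, ?_⟩
    · by_cases hj : j = i
      · subst hj; simp
      · simp [hj]
    · simp [bhat, ppStarVec, Pi.single_apply]

lemma trace_nonneg_aux {α : Type*} [Fintype α] [DecidableEq α] {A B : Matrix α α ℂ}
    (hA : A.PosSemidef) (hB : B.PosSemidef) : 0 ≤ (A * B).trace.re := by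
  obtain ⟨hb, hb2, -⟩ := sqrt_spec hB
  have h := (hA.conjTranspose_mul_mul_same (matSqrt B)).trace_nonneg
  rw [hb, Matrix.mul_assoc, Matrix.trace_mul_comm, Matrix.mul_assoc, hb2] at h
  exact (Complex.le_def.1 h).1

/-- Proposition 3: the inequality for post-processing assisted programming,
`F(ρ₁,ρ₂) F(ξ₁,ξ₂) F(λ₁,λ₂) ≤ B(λ₁⋆p^M_{ρ₁⊗ξ₁}, λ₂⋆p^M_{ρ₂⊗ξ₂})`. -/
theorem postprocessing_programming_inequality {d k n m : ℕ}
    (M : Fin n → Matrix (Fin d × Fin k) (Fin d × Fin k) ℂ) (hM : IsPOVM M)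
    (ρ₁ ρ₂ : Matrix (Fin d) (Fin d) ℂ) (hρ₁ : IsDensity ρ₁) (hρ₂ : IsDensity ρ₂)
    (ξ₁ ξ₂ : Matrix (Fin k) (Fin k) ℂ) (hξ₁ : IsDensity ξ₁) (hξ₂ : IsDensity ξ₂)
    (lam₁ lam₂ : Fin n → Fin m → ℝ) (hlam₁ : IsPostProc lam₁) (hlam₂ : IsPostProc lam₂) :
    fid ρ₁ ρ₂ * fid ξ₁ ξ₂ * ppF lam₁ lam₂ ≤
      ∑ y, Real.sqrt (∑ i, lam₁ i y * (M i * (ρ₁ ⊗ₖ ξ₁)).trace.re) *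
        Real.sqrt (∑ i, lam₂ i y * (M i * (ρ₂ ⊗ₖ ξ₂)).trace.re) := by
  have hp : ∀ i, 0 ≤ (M i * (ρ₁ ⊗ₖ ξ₁)).trace.re := fun i =>
    trace_nonneg_aux (hM.1 i) (hρ₁.1.kronecker hξ₁.1)
  have hq : ∀ i, 0 ≤ (M i * (ρ₂ ⊗ₖ ξ₂)).trace.re := fun i =>
    trace_nonneg_aux (hM.1 i) (hρ₂.1.kronecker hξ₂.1)
  have hF : fid ρ₁ ρ₂ * fid ξ₁ ξ₂ ≤ ∑ i, Real.sqrt (M i * (ρ₁ ⊗ₖ ξ₁)).trace.re *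
      Real.sqrt (M i * (ρ₂ ⊗ₖ ξ₂)).trace.re := by
    obtain ⟨W, hW, hWt⟩ := exists_W hρ₁.1 hρ₂.1
    obtain ⟨V, hV, hVt⟩ := exists_W hξ₁.1 hξ₂.1
    obtain ⟨a1, a2, -⟩ := sqrt_spec hρ₁.1
    obtain ⟨b1, b2, -⟩ := sqrt_spec hρ₂.1
    obtain ⟨c1, c2, -⟩ := sqrt_spec hξ₁.1
    obtain ⟨d1, d2, -⟩ := sqrt_spec hξ₂.1
    have := fuchs hM (matSqrt ρ₁ ⊗ₖ matSqrt ξ₁) (matSqrt ρ₂ ⊗ₖ matSqrt ξ₂) (W ⊗ₖ V)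
      (by rw [Matrix.conjTranspose_kronecker, a1, c1])
      (by rw [Matrix.conjTranspose_kronecker, b1, d1])
      (by simp only [Matrix.conjTranspose_kronecker, ← Matrix.mul_kronecker_mul, hW, hV])
    simp only [← Matrix.mul_kronecker_mul, a2, b2, c2, d2, Matrix.trace_kronecker, hWt, hVt]
      at this
    refine le_trans ?_ this
    rw [← Complex.ofReal_mul, Complex.norm_real]
    exact le_abs_self _
  refine (mul_le_mul_of_nonneg_right hF (ppF_nonneg lam₁ lam₂)).trans ?_
  rw [Finset.sum_mul]
  calc _ ≤ ∑ i, ∑ y, Real.sqrt (lam₁ i y * (M i * (ρ₁ ⊗ₖ ξ₁)).trace.re) *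
        Real.sqrt (lam₂ i y * (M i * (ρ₂ ⊗ₖ ξ₂)).trace.re) := by
        refine Finset.sum_le_sum fun i _ => ?_
        refine (mul_le_mul_of_nonneg_left (ppF_le lam₁ lam₂ i) (by positivity)).trans_eq ?_
        rw [Finset.mul_sum]
        refine Finset.sum_congr rfl fun y _ => ?_
        rw [Real.sqrt_mul (hlam₁.1 i y), Real.sqrt_mul (hlam₂.1 i y)]
        ring
    _ = _ := Finset.sum_comm
    _ ≤ _ := Finset.sum_le_sum fun y _ =>
        Real.sum_sqrt_mul_sqrt_le _ (fun i => mul_nonneg (hlam₁.1 i y) (hp i))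
          (fun i => mul_nonneg (hlam₂.1 i y) (hq i))
end QProg
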